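/- Let X and Y be nonempty finite sets, μ, ν strictly positive weight functions on X and Y, c a cost, ε > 0, and φ₁, φ₂ entropy functions satisfying Assumption A. Let 𝒥_A and 𝒥_B be two partitions of X into nonempty subsets, and let π⁰ be a nonnegative plan with E(π⁰) < ∞. Define the sequential domain decomposition iterates (π^k)_{k≥1} by: for odd k use partition 𝒥_A and for even k use 𝒥_B, and in one iteration cycle through the cells X_J of the chosen partition in a fixed order, each time replacing the restriction of the current plan to X_J × Y by the unique minimizer of the cell subproblem E_J(·| ν_{-J}), where ν_{-J}(y) := Σ_{x ∉ X_J} π(x,y) is computed from the current (already partially updated) plan π. Then the sequence (π^k)_k converges (pointwise on X × Y) to the unique global minimizer of E(π) := Σ_{x,y} c(x,y)π(x,y) + ε·KL(π | μ ⊗ ν) + D_{φ₁}(P_X π | μ) + D_{φ₂}(P_Y π | ν). -/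

import Mathlib

open Filter Topology
open scoped Classical

noncomputable section

/-- `φ : ℝ → ℝ ∪ {+∞}` is an entropy function: lower semicontinuous, convex,
`dom(φ) ⊆ [0,∞)`, `dom(φ)\{0} ≠ ∅`, never taking the value `-∞`. -/
def IsEntropyFn (φ : ℝ → EReal) : Prop :=
  LowerSemicontinuous φ ∧
  (∀ x y a b : ℝ, 0 ≤ a → 0 ≤ b → a + b = 1 →
      φ (a * x + b * y) ≤ (a : EReal) * φ x + (b : EReal) * φ y) ∧
  (∀ x : ℝ, φ x ≠ ⊥) ∧
  (∀ x : ℝ, φ x < ⊤ → 0 ≤ x) ∧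
  (∃ x : ℝ, x ≠ 0 ∧ φ x < ⊤)

/-- The recession slope `φ'_∞ = lim_{x→∞} φ(x)/x`. -/
def recessionSlope (φ : ℝ → EReal) : EReal :=
  Filter.limsup (fun x : ℝ => φ x * ((x⁻¹ : ℝ) : EReal)) Filter.atTop

/-- The `φ`-divergence on a finite set `Z`:
`D_φ(ρ|σ) = ∑_{z : σ z > 0} σ z · φ(ρ z / σ z) + φ'_∞ · ∑_{z : σ z = 0} ρ z`. -/
def divergence {Z : Type*} [Fintype Z] (φ : ℝ → EReal) (ρ σ : Z → ℝ) : EReal :=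
  (∑ z, if 0 < σ z then (σ z : EReal) * φ (ρ z / σ z) else 0)
    + recessionSlope φ * ((∑ z, if σ z = 0 then ρ z else 0 : ℝ) : EReal)

/-- The convex conjugate `φ*(z) = sup_{x ∈ ℝ} (z·x − φ(x))`. -/
def conjFn (φ : ℝ → EReal) (z : ℝ) : EReal :=
  ⨆ x : ℝ, (((z * x : ℝ) : EReal) - φ x)

/-- Kullback–Leibler divergence on a finite set, with `0·log 0 = 0`:
`KL(ρ|σ) = ∑ z (ρ z log(ρ z/σ z) − ρ z + σ z)` if `ρ ≪ σ`, else `+∞`. -/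
def KLfin {Z : Type*} [Fintype Z] (ρ σ : Z → ℝ) : EReal :=
  if ∀ z, σ z = 0 → ρ z = 0 then
    ((∑ z, (ρ z * Real.log (ρ z / σ z) - ρ z + σ z) : ℝ) : EReal)
  else ⊤

/-- Assumption A: the entropy function `φ` is nonnegative, finite on `[0,∞)`,
and continuously differentiable on the interior `(0,∞)` of its domain. -/
def AssumptionA (φ : ℝ → EReal) : Prop :=
  IsEntropyFn φ ∧ (∀ x : ℝ, 0 ≤ φ x) ∧ (∀ x : ℝ, 0 ≤ x → φ x ≠ ⊤) ∧
  ContDiffOn ℝ 1 (fun s : ℝ => (φ s).toReal) (Set.Ioi (0 : ℝ))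

/-- Primal objective of the unbalanced (cell) problem with `Y`-submarginal `νm`:
`E_J(π|νm) = ⟨c, π⟩ + ε KL(π | μ⊗ν) + D_{φ₁}(P_X π | μ) + D_{φ₂}(P_Y π + νm | ν)`. -/
def EJfun {W Y : Type*} [Fintype W] [Fintype Y]
    (c : W → Y → ℝ) (ε : ℝ) (φ₁ φ₂ : ℝ → EReal)
    (μ : W → ℝ) (ν : Y → ℝ) (νm : Y → ℝ) (π : W → Y → ℝ) : EReal :=
  ((∑ x, ∑ y, c x y * π x y : ℝ) : EReal)
    + (ε : EReal) * KLfin (fun p : W × Y => π p.1 p.2) (fun p : W × Y => μ p.1 * ν p.2)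
    + divergence φ₁ (fun x => ∑ y, π x y) μ
    + divergence φ₂ (fun y => (∑ x, π x y) + νm y) ν

/-- Dual objective of the unbalanced (cell) problem with `Y`-submarginal `νm`. -/
def DJfun {W Y : Type*} [Fintype W] [Fintype Y]
    (c : W → Y → ℝ) (ε : ℝ) (φ₁ φ₂ : ℝ → EReal)
    (μ : W → ℝ) (ν : Y → ℝ) (νm : Y → ℝ) (α : W → ℝ) (β : Y → ℝ) : EReal :=
  ((ε * ∑ x, ∑ y, (1 - Real.exp ((α x + β y - c x y) / ε)) * (μ x * ν y) : ℝ) : EReal)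
    - (∑ x, (μ x : EReal) * conjFn φ₁ (-(α x)))
    - (∑ y, (ν y : EReal) * conjFn φ₂ (-(β y)))
    - ((∑ y, β y * νm y : ℝ) : EReal)

/-- The `Y`-submarginal `ν_{-J}` of the plan `π` outside the cell `J`:
`ν_{-J}(y) = ∑_{x ∉ J} π(x,y)`. -/
def outMarg {X Y : Type*} [Fintype X] (J : Set X) (π : X → Y → ℝ) : Y → ℝ :=
  fun y => ∑ x, (Jᶜ).indicator (fun x' => π x' y) x

/-- The global unbalanced objective
`E(π) = ⟨c, π⟩ + ε KL(π|μ⊗ν) + D_{φ₁}(P_X π|μ) + D_{φ₂}(P_Y π|ν)`. -/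
def Eglobal {X Y : Type*} [Fintype X] [Fintype Y]
    (c : X → Y → ℝ) (ε : ℝ) (φ₁ φ₂ : ℝ → EReal)
    (μ : X → ℝ) (ν : Y → ℝ) (π : X → Y → ℝ) : EReal :=
  EJfun c ε φ₁ φ₂ μ ν (fun _ => 0) π

/-- An indexed family `Js : Fin n → Set X` is a partition of `X` into nonempty
subsets. -/
def IsFinPartition {X : Type*} {n : ℕ} (Js : Fin n → Set X) : Prop :=
  (∀ i, (Js i).Nonempty) ∧ (⋃ i, Js i) = Set.univ ∧
    ∀ i j, i ≠ j → Disjoint (Js i) (Js j)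

/-- `update` implements one cell update: `update J π` agrees with `π` outside
`J × Y` and its restriction to `J × Y` is the (unique) minimizer of the cell
subproblem `E_J(·|ν_{-J})` with `ν_{-J}(y) = ∑_{x ∉ J} π(x,y)`. -/
def IsCellUpdate {X Y : Type*} [Fintype X] [Fintype Y]
    (c : X → Y → ℝ) (ε : ℝ) (φ₁ φ₂ : ℝ → EReal) (μ : X → ℝ) (ν : Y → ℝ)
    (update : Set X → (X → Y → ℝ) → (X → Y → ℝ)) : Prop :=
  ∀ (J : Set X) (π : X → Y → ℝ), (∀ x y, 0 ≤ π x y) →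
    (∀ x y, 0 ≤ update J π x y) ∧
    (∀ x, x ∉ J → ∀ y, update J π x y = π x y) ∧
    ∀ π' : ↥J → Y → ℝ, (∀ (j : J) (y : Y), 0 ≤ π' j y) →
      EJfun (fun (j : J) y => c j y) ε φ₁ φ₂ (fun (j : J) => μ j) ν (outMarg J π)
          (fun (j : J) y => update J π j y)
        ≤ EJfun (fun (j : J) y => c j y) ε φ₁ φ₂ (fun (j : J) => μ j) ν (outMarg J π) π'

/-- One sequential domain decomposition sweep: cycle through the cells of the
partition in their fixed order, updating the current plan after each cell. -/
def sweep {X Y : Type*} (update : Set X → (X → Y → ℝ) → (X → Y → ℝ))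
    {n : ℕ} (Js : Fin n → Set X) (π : X → Y → ℝ) : X → Y → ℝ :=
  (List.ofFn Js).foldl (fun p J => update J p) π

def FrDD {W Y : Type*} [Fintype W] [Fintype Y] (h : W → Y → ℝ → ℝ) (k : W → ℝ → ℝ)
    (l : Y → ℝ → ℝ) (νm : Y → ℝ) (π : W → Y → ℝ) : ℝ :=
  (∑ x, ((∑ y, h x y (π x y)) + k x (∑ y, π x y))) + ∑ y, l y ((∑ x, π x y) + νm y)

structure GoodDD (f : ℝ → ℝ) : Prop where
  conv : ConvexOn ℝ (Set.Ici 0) f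
  cont : ContinuousOn f (Set.Ici 0)
  diff : ∀ t, 0 < t → DifferentiableAt ℝ f t
  nn : ∀ t, 0 ≤ t → 0 ≤ f t

structure GoodHDD (f : ℝ → ℝ) : Prop where
  conv : StrictConvexOn ℝ (Set.Ici 0) f
  cont : ContinuousOn f (Set.Ici 0)
  diff : ∀ t, 0 < t → DifferentiableAt ℝ f t
  low : ∃ K, ∀ t, 0 ≤ t → t ≤ f t + K
  slope : ∀ C : ℝ, ∃ δ > 0, ∀ t, 0 < t → t < δ → f t < f 0 - C * t

lemma GoodDD.incr {f : ℝ → ℝ} (hf : GoodDD f) (s : ℝ) (hs : 0 ≤ s) (t : ℝ) (h0 : 0 ≤ t)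
    (h1 : t ≤ 1) : f (s + t) ≤ f s + t * (f (s + 1) - f s) := by
  have := hf.conv.2 (show s ∈ Set.Ici 0 from hs)
    (show s + 1 ∈ Set.Ici 0 from by simp; linarith) (sub_nonneg.2 h1) h0 (by ring)
  simp only [smul_eq_mul] at this
  rw [show (1 - t) * s + t * (s + 1) = s + t by ring] at this
  linarith

section abs
variable {X Y : Type*} [Fintype X] [Fintype Y] {h : X → Y → ℝ → ℝ} {k : X → ℝ → ℝ}
    {l : Y → ℝ → ℝ}

lemma FrDD_conv (hh : ∀ x y, GoodHDD (h x y)) (hk : ∀ x, GoodDD (k x)) (hl : ∀ y, GoodDD (l y))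
    (p q : X → Y → ℝ) (hp : ∀ x y, 0 ≤ p x y) (hq : ∀ x y, 0 ≤ q x y) (a b : ℝ) (ha : 0 ≤ a)
    (hb : 0 ≤ b) (hab : a + b = 1) :
    FrDD h k l (fun _ => 0) (fun x y => a * p x y + b * q x y) ≤
      a * FrDD h k l (fun _ => 0) p + b * FrDD h k l (fun _ => 0) q := by
  unfold FrDD
  simp only [add_zero, mul_add, Finset.mul_sum, Finset.sum_add_distrib]
  have e1 : ∑ x, ∑ y, h x y (a * p x y + b * q x y) ≤
      ∑ x, ∑ y, a * h x y (p x y) + ∑ x, ∑ y, b * h x y (q x y) := by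
    simp only [← Finset.sum_add_distrib]
    exact Finset.sum_le_sum fun x _ => Finset.sum_le_sum fun y _ =>
      (hh x y).conv.convexOn.2 (hp x y) (hq x y) ha hb hab
  have e2 : ∑ x, k x (∑ y, a * p x y + ∑ y, b * q x y) ≤
      ∑ x, a * k x (∑ y, p x y) + ∑ x, b * k x (∑ y, q x y) := by
    rw [← Finset.sum_add_distrib]
    simp only [← Finset.mul_sum (s := (Finset.univ : Finset Y))]
    exact Finset.sum_le_sum fun x _ => (hk x).conv.2 (Finset.sum_nonneg fun y _ => hp x y)
      (Finset.sum_nonneg fun y _ => hq x y) ha hb hab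
  have e3 : ∑ y, l y (∑ x, a * p x y + ∑ x, b * q x y) ≤
      ∑ y, a * l y (∑ x, p x y) + ∑ y, b * l y (∑ x, q x y) := by
    rw [← Finset.sum_add_distrib]
    simp only [← Finset.mul_sum (s := (Finset.univ : Finset X))]
    exact Finset.sum_le_sum fun y _ => (hl y).conv.2 (Finset.sum_nonneg fun x _ => hp x y)
      (Finset.sum_nonneg fun x _ => hq x y) ha hb hab
  linarith

lemma FrDD_strict (hh : ∀ x y, GoodHDD (h x y)) (hk : ∀ x, GoodDD (k x))
    (hl : ∀ y, GoodDD (l y))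
    (p q : X → Y → ℝ) (hp : ∀ x y, 0 ≤ p x y) (hq : ∀ x y, 0 ≤ q x y) (hne : p ≠ q) :
    FrDD h k l (fun _ => 0) (fun x y => (1/2 : ℝ) * p x y + (1/2 : ℝ) * q x y) <
      (1/2 : ℝ) * FrDD h k l (fun _ => 0) p + (1/2 : ℝ) * FrDD h k l (fun _ => 0) q := by
  have ha : (0:ℝ) < 1/2 := by norm_num
  have hab : (1/2 : ℝ) + 1/2 = 1 := by norm_num
  generalize (1/2 : ℝ) = a at *
  unfold FrDD
  simp only [add_zero, mul_add, Finset.mul_sum, Finset.sum_add_distrib]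
  have e1 : ∑ x, ∑ y, h x y (a * p x y + a * q x y) <
      ∑ x, ∑ y, a * h x y (p x y) + ∑ x, ∑ y, a * h x y (q x y) := by
    simp only [← Finset.sum_add_distrib]
    obtain ⟨x0, hx0⟩ := Function.ne_iff.1 hne
    obtain ⟨y0, hy0⟩ := Function.ne_iff.1 hx0
    refine Finset.sum_lt_sum (fun x _ => Finset.sum_le_sum fun y _ =>
      (hh x y).conv.convexOn.2 (hp x y) (hq x y) ha.le ha.le hab) ⟨x0, Finset.mem_univ _, ?_⟩
    exact Finset.sum_lt_sum (fun y _ =>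
      (hh x0 y).conv.convexOn.2 (hp x0 y) (hq x0 y) ha.le ha.le hab) ⟨y0, Finset.mem_univ _,
      (hh x0 y0).conv.2 (hp x0 y0) (hq x0 y0) hy0 ha ha hab⟩
  have e2 : ∑ x, k x (∑ y, a * p x y + ∑ y, a * q x y) ≤
      ∑ x, a * k x (∑ y, p x y) + ∑ x, a * k x (∑ y, q x y) := by
    rw [← Finset.sum_add_distrib]
    simp only [← Finset.mul_sum (s := (Finset.univ : Finset Y))]
    exact Finset.sum_le_sum fun x _ => (hk x).conv.2 (Finset.sum_nonneg fun y _ => hp x y)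
      (Finset.sum_nonneg fun y _ => hq x y) ha.le ha.le hab
  have e3 : ∑ y, l y (∑ x, a * p x y + ∑ x, a * q x y) ≤
      ∑ y, a * l y (∑ x, p x y) + ∑ y, a * l y (∑ x, q x y) := by
    rw [← Finset.sum_add_distrib]
    simp only [← Finset.mul_sum (s := (Finset.univ : Finset X))]
    exact Finset.sum_le_sum fun y _ => (hl y).conv.2 (Finset.sum_nonneg fun x _ => hp x y)
      (Finset.sum_nonneg fun x _ => hq x y) ha.le ha.le hab
  linarith

lemma FrDD_cont (hh : ∀ x y, GoodHDD (h x y)) (hk : ∀ x, GoodDD (k x)) (hl : ∀ y, GoodDD (l y)) :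
    ContinuousOn (FrDD h k l (fun _ => 0)) {p | ∀ x y, 0 ≤ p x y} := by
  unfold FrDD
  simp only [add_zero]
  refine ContinuousOn.add (continuousOn_finsetSum _ fun x _ => ContinuousOn.add
    (continuousOn_finsetSum _ fun y _ => ?_) ?_) (continuousOn_finsetSum _ fun y _ => ?_)
  · exact (hh x y).cont.comp (by fun_prop) fun p hp => hp x y
  · exact (hk x).cont.comp (by fun_prop) fun p hp => Finset.sum_nonneg fun y _ => hp x y
  · exact (hl y).cont.comp (by fun_prop) fun p hp => Finset.sum_nonneg fun x _ => hp x y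

lemma FrDD_low (hh : ∀ x y, GoodHDD (h x y)) (hk : ∀ x, GoodDD (k x)) (hl : ∀ y, GoodDD (l y)) :
    ∃ K : ℝ, ∀ p : X → Y → ℝ, (∀ x y, 0 ≤ p x y) → ∀ x y, p x y ≤ FrDD h k l (fun _ => 0) p + K := by
  choose K hK using fun x y => (hh x y).low
  refine ⟨∑ x, ∑ y, K x y, fun p hp x y => ?_⟩
  have e1 : ∑ x, ∑ y, p x y ≤ ∑ x, ∑ y, h x y (p x y) + ∑ x, ∑ y, K x y := by
    simp only [← Finset.sum_add_distrib]
    exact Finset.sum_le_sum fun x _ => Finset.sum_le_sum fun y _ => hK x y _ (hp x y)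
  have e2 : 0 ≤ ∑ x, k x (∑ y, p x y) :=
    Finset.sum_nonneg fun x _ => (hk x).nn _ (Finset.sum_nonneg fun y _ => hp x y)
  have e3 : 0 ≤ ∑ y, l y (∑ x, p x y) :=
    Finset.sum_nonneg fun y _ => (hl y).nn _ (Finset.sum_nonneg fun x _ => hp x y)
  have e4 : p x y ≤ ∑ y, p x y :=
    Finset.single_le_sum (f := fun y => p x y) (fun y _ => hp x y) (Finset.mem_univ y)
  have e5 : ∑ y, p x y ≤ ∑ x, ∑ y, p x y :=
    Finset.single_le_sum (f := fun x => ∑ y, p x y)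
      (fun x _ => Finset.sum_nonneg fun y _ => hp x y) (Finset.mem_univ x)
  unfold FrDD
  simp only [add_zero, Finset.sum_add_distrib]
  linarith

lemma FrDD_diff (hh : ∀ x y, GoodHDD (h x y)) (hk : ∀ x, GoodDD (k x)) (hl : ∀ y, GoodDD (l y))
    [Nonempty X] [Nonempty Y]
    (p : X → Y → ℝ) (hp : ∀ x y, 0 < p x y) : DifferentiableAt ℝ (FrDD h k l (fun _ => 0)) p := by
  unfold FrDD
  simp only [add_zero]
  refine DifferentiableAt.add (DifferentiableAt.fun_sum fun x _ => DifferentiableAt.add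
    (DifferentiableAt.fun_sum fun y _ => ?_) ?_) (DifferentiableAt.fun_sum fun y _ => ?_)
  · exact DifferentiableAt.comp (g := h x y) (f := fun p : X → Y → ℝ => p x y) p
      ((hh x y).diff _ (hp x y)) (by fun_prop)
  · exact DifferentiableAt.comp (g := k x) (f := fun p : X → Y → ℝ => ∑ y, p x y) p
      ((hk x).diff _ (Finset.sum_pos (fun y _ => hp x y) Finset.univ_nonempty)) (by fun_prop)
  · exact DifferentiableAt.comp (g := l y) (f := fun p : X → Y → ℝ => ∑ x, p x y) p
      ((hl y).diff _ (Finset.sum_pos (fun x _ => hp x y) Finset.univ_nonempty)) (by fun_prop)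

/-- perturb one coordinate -/
def pertDD (p : X → Y → ℝ) (x0 : X) (y0 : Y) (t : ℝ) : X → Y → ℝ :=
  fun x y => p x y + if x = x0 ∧ y = y0 then t else 0

lemma FrDD_pos (hh : ∀ x y, GoodHDD (h x y)) (hk : ∀ x, GoodDD (k x)) (hl : ∀ y, GoodDD (l y))
    (p : X → Y → ℝ) (hp : ∀ x y, 0 ≤ p x y) (x0 : X) (y0 : Y)
    (hmin : ∀ t, 0 ≤ t →
      FrDD h k l (fun _ => 0) p ≤ FrDD h k l (fun _ => 0) (pertDD p x0 y0 t)) :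
    0 < p x0 y0 := by
  by_contra hcon
  have h0 : p x0 y0 = 0 := le_antisymm (not_lt.1 hcon) (hp _ _)
  set a := ∑ y, p x0 y with ha
  set b := ∑ x, p x y0 with hb
  have ha0 : 0 ≤ a := Finset.sum_nonneg fun y _ => hp x0 y
  have hb0 : 0 ≤ b := Finset.sum_nonneg fun x _ => hp x y0
  obtain ⟨δ, hδ, hs⟩ := (hh x0 y0).slope ((k x0 (a + 1) - k x0 a) + (l y0 (b + 1) - l y0 b))
  obtain ⟨t, ht0, ht⟩ : ∃ t, 0 < t ∧ t < min δ 1 := exists_between (by positivity)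
  have hm := hmin t ht0.le
  have hst := hs t ht0 (ht.trans_le (min_le_left _ _))
  have ht1 : t ≤ 1 := ht.le.trans (min_le_right _ _)
  have hki := (hk x0).incr a ha0 t ht0.le ht1
  have hli := (hl y0).incr b hb0 t ht0.le ht1
  have e1 : ∑ x, ∑ y, h x y (pertDD p x0 y0 t x y) =
      ∑ x, ∑ y, h x y (p x y) + (h x0 y0 t - h x0 y0 0) := by
    rw [← sub_eq_iff_eq_add']
    simp only [← Finset.sum_sub_distrib]
    rw [Finset.sum_eq_single x0, Finset.sum_eq_single y0]
    · simp [pertDD, h0]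
    · intro y _ hy; simp [pertDD, hy]
    · simp
    · intro x _ hx; simp [pertDD, hx]
    · simp
  have e2 : ∑ x, k x (∑ y, pertDD p x0 y0 t x y) =
      ∑ x, k x (∑ y, p x y) + (k x0 (a + t) - k x0 a) := by
    rw [← sub_eq_iff_eq_add']
    simp only [← Finset.sum_sub_distrib]
    rw [Finset.sum_eq_single x0]
    · simp [pertDD, Finset.sum_add_distrib, ha]
    · intro x _ hx; simp [pertDD, hx]
    · simp
  have e3 : ∑ y, l y (∑ x, pertDD p x0 y0 t x y) =
      ∑ y, l y (∑ x, p x y) + (l y0 (b + t) - l y0 b) := by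
    rw [← sub_eq_iff_eq_add']
    simp only [← Finset.sum_sub_distrib]
    rw [Finset.sum_eq_single y0]
    · simp [pertDD, Finset.sum_add_distrib, hb]
    · intro x _ hx; simp [pertDD, hx]
    · simp
  unfold FrDD at hm
  simp only [add_zero, Finset.sum_add_distrib] at hm
  rw [e1, e2, e3] at hm
  nlinarith

lemma FrDD_global (hh : ∀ x y, GoodHDD (h x y)) (hk : ∀ x, GoodDD (k x))
    (hl : ∀ y, GoodDD (l y)) [Nonempty X] [Nonempty Y]
    (p : X → Y → ℝ) (hp : ∀ x y, 0 ≤ p x y)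
    (hmin : ∀ x0 y0 t, (∀ x y, 0 ≤ pertDD p x0 y0 t x y) →
      FrDD h k l (fun _ => 0) p ≤ FrDD h k l (fun _ => 0) (pertDD p x0 y0 t))
    (r : X → Y → ℝ) (hr : ∀ x y, 0 ≤ r x y) :
    FrDD h k l (fun _ => 0) p ≤ FrDD h k l (fun _ => 0) r := by
  have hpos : ∀ x y, 0 < p x y := fun x0 y0 => FrDD_pos hh hk hl p hp x0 y0 fun t ht =>
    hmin x0 y0 t fun x y => by unfold pertDD; have := hp x y; split_ifs <;> linarith
  have hd := (FrDD_diff hh hk hl p hpos).hasFDerivAt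
  set F := FrDD h k l (fun _ => 0) with hF
  set L := fderiv ℝ F p
  -- line derivative
  have hline : ∀ d : X → Y → ℝ, HasDerivAt (fun t : ℝ => F (p + t • d)) (L d) 0 := by
    intro d
    have := hd.hasLineDerivAt d
    exact this
  have hz : ∀ x0 y0, L (Pi.single x0 (Pi.single y0 1)) = 0 := by
    intro x0 y0
    have hpe : ∀ t : ℝ, p + t • (Pi.single x0 (Pi.single y0 1) : X → Y → ℝ) = pertDD p x0 y0 t := by
      intro t; ext x y
      by_cases hx : x = x0
      · subst hx
        by_cases hy : y = y0
        · subst hy; simp [pertDD]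
        · simp [pertDD, hy]
      · simp [pertDD, hx]
    refine IsLocalMin.hasDerivAt_eq_zero ?_ (hline _)
    have : ∀ᶠ t : ℝ in 𝓝 0, -(p x0 y0) < t := eventually_gt_nhds (by have := hpos x0 y0; linarith)
    filter_upwards [this] with t ht
    simp only [zero_smul, add_zero]
    rw [hpe]
    refine hmin x0 y0 t fun x y => ?_
    unfold pertDD
    split_ifs with hxy
    · rw [hxy.1, hxy.2]; linarith
    · simpa using hp x y
  have hL : ∀ d : X → Y → ℝ, L d = 0 := by
    intro d
    have : d = ∑ x, ∑ y, d x y • (Pi.single x (Pi.single y 1) : X → Y → ℝ) := by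
      ext x y
      simp only [Finset.sum_apply, Pi.smul_apply, smul_eq_mul]
      rw [Finset.sum_eq_single x, Finset.sum_eq_single y]
      · simp
      · intro b _ hb; simp [Ne.symm hb]
      · simp
      · intro b _ hb; simp [Ne.symm hb]
      · simp
    rw [this]
    simp only [map_sum, map_smul, hz, smul_zero, Finset.sum_const_zero]
  have hg := hline (r - p)
  rw [hL, hasDerivAt_iff_tendsto_slope] at hg
  have hg' := hg.mono_left (nhdsWithin_mono (0:ℝ) (show Set.Ioi (0:ℝ) ⊆ {0}ᶜ from
    fun t ht => ne_of_gt ht))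
  have : (0:ℝ) ≤ F r - F p := by
    refine le_of_tendsto hg' ?_
    have : ∀ᶠ t : ℝ in 𝓝[>] 0, t < 1 := nhdsWithin_le_nhds (eventually_lt_nhds one_pos)
    filter_upwards [this, self_mem_nhdsWithin] with t ht1 ht0
    have ht0' : 0 < t := ht0
    have := FrDD_conv hh hk hl p r hp hr (1 - t) t (by linarith) ht0'.le (by ring)
    rw [← hF] at this
    have e : p + t • (r - p) = fun x y => (1 - t) * p x y + t * r x y := by
      ext x y; simp; ring
    simp only [slope_def_field, zero_smul, add_zero, sub_zero]
    rw [div_le_iff₀ ht0', e]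
    linarith
  linarith

/-- Abstract convergence. -/
lemma abs_convDD (hh : ∀ x y, GoodHDD (h x y)) (hk : ∀ x, GoodDD (k x))
    (hl : ∀ y, GoodDD (l y)) [Nonempty X] [Nonempty Y]
    (update : Set X → (X → Y → ℝ) → (X → Y → ℝ))
    (hu : ∀ (J : Set X) (π : X → Y → ℝ), (∀ x y, 0 ≤ π x y) →
      (∀ x y, 0 ≤ update J π x y) ∧ (∀ x, x ∉ J → ∀ y, update J π x y = π x y) ∧
      ∀ r : X → Y → ℝ, (∀ x y, 0 ≤ r x y) → (∀ x, x ∉ J → ∀ y, r x y = π x y) →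
        FrDD h k l (fun _ => 0) (update J π) ≤ FrDD h k l (fun _ => 0) r)
    (A B : List (Set X)) (hA : ∀ x, ∃ J ∈ A, x ∈ J)
    (iter : ℕ → X → Y → ℝ) (h0 : ∀ x y, 0 ≤ iter 0 x y)
    (hiterS : ∀ k : ℕ, iter (k + 1) =
      if (k + 1) % 2 = 1 then A.foldl (fun p J => update J p) (iter k)
      else B.foldl (fun p J => update J p) (iter k)) :
    ∃ p : X → Y → ℝ, (∀ x y, 0 ≤ p x y) ∧
      (∀ r : X → Y → ℝ, (∀ x y, 0 ≤ r x y) →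
        FrDD h k l (fun _ => 0) p ≤ FrDD h k l (fun _ => 0) r) ∧
      (∀ r : X → Y → ℝ, (∀ x y, 0 ≤ r x y) →
        FrDD h k l (fun _ => 0) r ≤ FrDD h k l (fun _ => 0) p → r = p) ∧
      Tendsto iter atTop (𝓝 p) := by
  set F := FrDD h k l (fun _ => 0) with hF
  have hdec : ∀ J π, (∀ x y, 0 ≤ π x y) → F (update J π) ≤ F π := fun J π hπ =>
    (hu J π hπ).2.2 π hπ fun _ _ _ => rfl
  have hfold : ∀ (A : List (Set X)) π, (∀ x y, 0 ≤ π x y) →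
      (∀ x y, 0 ≤ A.foldl (fun p J => update J p) π x y) ∧
      F (A.foldl (fun p J => update J p) π) ≤ F π := by
    intro A
    induction A with
    | nil => intro π hπ; exact ⟨hπ, le_rfl⟩
    | cons J A ih =>
      intro π hπ
      have := ih _ (hu J π hπ).1
      exact ⟨this.1, this.2.trans (hdec J π hπ)⟩
  have hnn : ∀ n, ∀ x y, 0 ≤ iter n x y := by
    intro n
    induction n with
    | zero => exact h0
    | succ n ih =>
      rw [hiterS]; split_ifs
      · exact (hfold A _ ih).1
      · exact (hfold B _ ih).1
  have hanti : Antitone fun n => F (iter n) := by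
    refine antitone_nat_of_succ_le fun n => ?_
    rw [hiterS]; split_ifs
    · exact (hfold A _ (hnn n)).2
    · exact (hfold B _ (hnn n)).2
  obtain ⟨K, hK⟩ := FrDD_low hh hk hl
  set M := F (iter 0) + K
  let S : Set (X → Y → ℝ) := Set.univ.pi fun _ => Set.univ.pi fun _ => Set.Icc 0 M
  have hS : IsCompact S := isCompact_univ_pi fun _ => isCompact_univ_pi fun _ => isCompact_Icc
  have memS : ∀ π : X → Y → ℝ, (∀ x y, 0 ≤ π x y) → F π ≤ F (iter 0) → π ∈ S := by
    intro π hπ hle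
    simp only [S, Set.mem_univ_pi]
    intro x y
    have := hK π hπ x y
    rw [← hF] at this
    exact ⟨hπ x y, by simp only [M]; linarith⟩
  have Snn : ∀ π ∈ S, ∀ x y, 0 ≤ π x y := by
    intro π hπ x y
    simp only [S, Set.mem_univ_pi] at hπ
    exact (hπ x y).1
  have hbdd : BddBelow (Set.range fun n => F (iter n)) := by
    obtain ⟨x⟩ := ‹Nonempty X›
    obtain ⟨y⟩ := ‹Nonempty Y›
    refine ⟨-K, ?_⟩
    rintro _ ⟨n, rfl⟩
    have := hK _ (hnn n) x y
    have h2 := hnn n x y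
    rw [← hF] at this
    simp only
    linarith
  obtain ⟨Lm, hLm⟩ : ∃ Lm, Tendsto (fun n => F (iter n)) atTop (𝓝 Lm) :=
    ⟨_, tendsto_atTop_ciInf hanti hbdd⟩
  have hFc : ∀ (U : Ultrafilter ℕ) (a : ℕ → X → Y → ℝ) (p : X → Y → ℝ),
      (∀ n x y, 0 ≤ a n x y) → (∀ x y, 0 ≤ p x y) → Tendsto a U (𝓝 p) →
      Tendsto (fun n => F (a n)) U (𝓝 (F p)) := by
    intro U a p ha hp ht
    have hc : ContinuousWithinAt F {p | ∀ x y, 0 ≤ p x y} p := FrDD_cont hh hk hl p hp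
    exact hc.tendsto.comp (tendsto_nhdsWithin_iff.2 ⟨ht, Eventually.of_forall ha⟩)
  have hlim : ∀ (U : Ultrafilter ℕ) (a : ℕ → X → Y → ℝ), (∀ n, a n ∈ S) →
      ∃ p ∈ S, Tendsto a U (𝓝 p) := by
    intro U a ha
    have := hS.ultrafilter_le_nhds (U.map a) (by
      simp only [le_principal_iff, Ultrafilter.mem_coe, Ultrafilter.mem_map]
      exact Filter.univ_mem' ha)
    exact this
  have huniq : ∀ p q : X → Y → ℝ, (∀ x y, 0 ≤ p x y) → (∀ x y, 0 ≤ q x y) → F p = F q →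
      F q ≤ F (fun x y => (1/2 : ℝ) * p x y + (1/2 : ℝ) * q x y) → p = q := by
    intro p q hp hq he hle
    by_contra hne
    have := FrDD_strict hh hk hl p q hp hq hne
    rw [← hF] at this
    linarith
  -- ultrafilter
  set U : Ultrafilter ℕ := Ultrafilter.of atTop with hU
  have hUle : (U : Filter ℕ) ≤ atTop := Ultrafilter.of_le _
  have hiS : ∀ n, iter n ∈ S := fun n => memS _ (hnn n) (hanti (Nat.zero_le n))
  obtain ⟨p, hpS, hp⟩ := hlim U (fun n => iter (2 * n)) fun n => hiS _
  have hpn := Snn p hpS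
  have htw : Tendsto (fun n : ℕ => 2 * n) U atTop :=
    (tendsto_id.const_mul_atTop' (by norm_num : 0 < 2)).mono_left hUle
  have hFp : F p = Lm := tendsto_nhds_unique (hFc U _ p (fun n => hnn _) hpn hp) (hLm.comp htw)
  have hkey : ∀ (A : List (Set X)) (a : ℕ → X → Y → ℝ), (∀ n, a n ∈ S) →
      (∀ n, F (a n) ≤ F (iter (2 * n))) →
      (∀ n, F (iter (2 * n + 1)) ≤ F (A.foldl (fun p J => update J p) (a n))) →
      Tendsto a U (𝓝 p) → ∀ J ∈ A, ∀ r : X → Y → ℝ, (∀ x y, 0 ≤ r x y) →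
        (∀ x, x ∉ J → ∀ y, r x y = p x y) → F p ≤ F r := by
    intro A
    induction A with
    | nil => simp
    | cons J A ih =>
      intro a haS hau hal hap
      have han : ∀ n x y, 0 ≤ a n x y := fun n => Snn _ (haS n)
      have hbn : ∀ n x y, 0 ≤ update J (a n) x y := fun n => (hu J _ (han n)).1
      have hbu : ∀ n, F (update J (a n)) ≤ F (iter (2 * n)) := fun n =>
        (hdec J _ (han n)).trans (hau n)
      have hbS : ∀ n, update J (a n) ∈ S := fun n =>
        memS _ (hbn n) ((hbu n).trans (hanti (Nat.zero_le _)))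
      obtain ⟨q, hqS, hq⟩ := hlim U _ hbS
      have hqn := Snn q hqS
      have hFq : F q = Lm := by
        refine tendsto_nhds_unique (hFc U _ q hbn hqn hq) ?_
        refine tendsto_of_tendsto_of_tendsto_of_le_of_le
          (hLm.comp ((tendsto_add_atTop_nat 1).comp htw)) (hLm.comp htw) ?_ hbu
        intro n
        exact (hal n).trans (hfold A _ (hbn n)).2
      have hqp : ∀ x, x ∉ J → ∀ y, q x y = p x y := by
        intro x hx y
        have t1 := (tendsto_pi_nhds.1 ((tendsto_pi_nhds.1 hq) x)) y
        have t2 := (tendsto_pi_nhds.1 ((tendsto_pi_nhds.1 hap) x)) y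
        refine tendsto_nhds_unique t1 (t2.congr fun n => ?_)
        exact ((hu J _ (han n)).2.1 x hx y).symm
      have hmin : ∀ r : X → Y → ℝ, (∀ x y, 0 ≤ r x y) →
        (∀ x, x ∉ J → ∀ y, r x y = p x y) → F q ≤ F r := by
        intro r hr hrp
        have t1 := hFc U _ q hbn hqn hq
        let R : ℕ → X → Y → ℝ := fun n x y => if x ∈ J then r x y else a n x y
        have hRn : ∀ n x y, 0 ≤ R n x y := by
          intro n x y; simp only [R]; split_ifs
          · exact hr x y
          · exact han n x y
        have t2 : Tendsto R U (𝓝 r) := by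
          refine tendsto_pi_nhds.2 fun x => tendsto_pi_nhds.2 fun y => ?_
          by_cases hx : x ∈ J
          · simp only [R, hx, if_true]; exact tendsto_const_nhds
          · simp only [R, hx, if_false]
            rw [hrp x hx y]
            exact (tendsto_pi_nhds.1 ((tendsto_pi_nhds.1 hap) x)) y
        refine le_of_tendsto_of_tendsto' t1 (hFc U _ r hRn hr t2) fun n => ?_
        exact (hu J _ (han n)).2.2 _ (hRn n) fun x hx y => by simp [R, hx]
      have hpq : p = q := by
        refine huniq p q hpn hqn (hFp.trans hFq.symm) (hmin _ ?_ ?_)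
        · intro x y; have := hpn x y; have := hqn x y; positivity
        · intro x hx y; rw [hqp x hx y]; ring
      intro J' hJ'
      rcases List.mem_cons.1 hJ' with rfl | hJ'
      · rw [← hpq] at hmin; exact hmin
      · exact ih (fun n => update J (a n)) hbS hbu hal (hpq ▸ hq) J' hJ'
  have hblock := hkey A (fun n => iter (2 * n)) (fun n => hiS _) (fun n => le_rfl) (fun n => by
    rw [hiterS, if_pos (by omega)]) hp
  have hglob : ∀ r : X → Y → ℝ, (∀ x y, 0 ≤ r x y) → F p ≤ F r := by
    refine FrDD_global hh hk hl p hpn fun x0 y0 t ht => ?_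
    obtain ⟨J, hJ, hx⟩ := hA x0
    refine hblock J hJ _ ht fun x hxJ y => ?_
    have : x ≠ x0 := fun e => hxJ (e ▸ hx)
    simp [pertDD, this]
  have hun : ∀ r : X → Y → ℝ, (∀ x y, 0 ≤ r x y) → F r ≤ F p → r = p := by
    intro r hr hle
    refine huniq r p hr hpn (le_antisymm hle (hglob r hr)) (hglob _ ?_)
    intro x y; have := hpn x y; have := hr x y; positivity
  refine ⟨p, hpn, hglob, hun, ?_⟩
  rw [tendsto_iff_ultrafilter]
  intro V hV
  obtain ⟨q, hqS, hq⟩ := hlim V iter hiS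
  have hqn := Snn q hqS
  have : F q = Lm := tendsto_nhds_unique (hFc V _ q hnn hqn hq) (hLm.mono_left hV)
  rw [← hun q hqn (this.trans hFp.symm).le]
  exact hq

end abs

/-! concrete -/

lemma goodH_DD (c ε m : ℝ) (hε : 0 < ε) (hm : 0 < m) :
    GoodHDD (fun t => c * t + ε * (t * Real.log (t / m) - t + m)) := by
  have he : (fun t => c * t + ε * (t * Real.log (t / m) - t + m)) =
      fun t => ε * (t * Real.log t) + ((c - ε * Real.log m - ε) * t + ε * m) := by
    ext t
    by_cases ht : t = 0
    · simp [ht]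
    · rw [Real.log_div ht hm.ne']; ring
  rw [he]
  generalize c - ε * Real.log m - ε = a
  generalize ε * m = b
  refine ⟨?_, ?_, ?_, ?_, ?_⟩
  · refine StrictConvexOn.add_convexOn ?_ ?_
    · refine ⟨convex_Ici 0, fun x hx y hy hxy u v hu hv huv => ?_⟩
      have := Real.strictConvexOn_mul_log.2 hx hy hxy hu hv huv
      simp only [smul_eq_mul] at *
      nlinarith
    · refine ⟨convex_Ici 0, fun x hx y hy u v hu hv huv => ?_⟩
      simp only [smul_eq_mul]
      have : b = (u + v) * b := by rw [huv, one_mul]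
      apply le_of_eq
      linear_combination this
  · exact Continuous.continuousOn (by
      have := Real.continuous_mul_log
      fun_prop)
  · intro t ht
    have : t ≠ 0 := ht.ne'
    fun_prop (disch := assumption)
  · -- t log t ≥ s t - e^s
    set s := (1 - a) / ε with hs
    refine ⟨ε * Real.exp s - b, fun t ht => ?_⟩
    have key : s * t - Real.exp s ≤ t * Real.log t := by
      rcases ht.eq_or_lt with rfl | ht
      · simp; positivity
      · have := Real.log_le_sub_one_of_pos (show 0 < Real.exp s / t by positivity)
        rw [Real.log_div (Real.exp_pos s).ne' ht.ne', Real.log_exp] at this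
        have h2 : Real.exp s / t * t = Real.exp s := by field_simp
        nlinarith
    have hsε : ε * s = 1 - a := by rw [hs]; field_simp
    have := mul_le_mul_of_nonneg_left key hε.le
    have h3 : ε * (s * t - Real.exp s) = (1 - a) * t - ε * Real.exp s := by rw [← hsε]; ring
    linarith
  · intro C
    refine ⟨Real.exp (-(C + a) / ε), Real.exp_pos _, fun t ht0 ht => ?_⟩
    have : Real.log t < -(C + a) / ε := (Real.log_lt_iff_lt_exp ht0).2 ht
    rw [lt_div_iff₀ hε] at this
    simp
    nlinarith

lemma good_DD {φ : ℝ → EReal} (hφ : AssumptionA φ) : GoodDD (fun s => (φ s).toReal) := by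
  obtain ⟨⟨hlsc, hconv, hbot, -, -⟩, hnn, htop, hdiff⟩ := hφ
  have hco : ∀ s, 0 ≤ s → φ s = (((φ s).toReal : ℝ) : EReal) := fun s hs =>
    (EReal.coe_toReal (htop s hs) (hbot s)).symm
  have hcv : ConvexOn ℝ (Set.Ici 0) (fun s => (φ s).toReal) := by
    refine ⟨convex_Ici 0, fun x hx y hy a b ha hb hab => ?_⟩
    have hx' : (0:ℝ) ≤ x := hx
    have hy' : (0:ℝ) ≤ y := hy
    have := hconv x y a b ha hb hab
    rw [hco x hx, hco y hy, hco (a * x + b * y) (by positivity)] at this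
    simp only [smul_eq_mul]
    exact_mod_cast this
  have hd : ∀ t : ℝ, 0 < t → DifferentiableAt ℝ (fun s => (φ s).toReal) t := fun t ht =>
    (hdiff.differentiableOn (by norm_num)).differentiableAt (Ioi_mem_nhds ht)
  refine ⟨hcv, ?_, hd, fun t _ => EReal.toReal_nonneg (hnn t)⟩
  intro t ht
  rcases (show (0:ℝ) ≤ t from ht).eq_or_lt with rfl | ht
  · show Tendsto _ _ _
    rw [tendsto_order]
    constructor
    · intro y hy
      have h1 : ((y : ℝ) : EReal) < φ 0 := by rw [hco 0 le_rfl]; exact_mod_cast hy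
      filter_upwards [nhdsWithin_le_nhds (hlsc 0 _ h1), self_mem_nhdsWithin] with s hs hs0
      rw [hco s hs0] at hs
      exact_mod_cast hs
    · intro y hy
      have hlim : Tendsto (fun s : ℝ => (1 - s) * (φ 0).toReal + s * (φ 1).toReal) (𝓝 0)
          (𝓝 ((φ 0).toReal)) := by
        have : Continuous (fun s : ℝ => (1 - s) * (φ 0).toReal + s * (φ 1).toReal) := by fun_prop
        have := this.tendsto 0
        simpa using this
      have h1 : ∀ᶠ s : ℝ in 𝓝 0, s < 1 := eventually_lt_nhds one_pos
      filter_upwards [nhdsWithin_le_nhds (hlim.eventually_lt_const hy),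
        nhdsWithin_le_nhds h1, self_mem_nhdsWithin] with s hs hs1 hs0
      have := hcv.2 (show (0:ℝ) ∈ Set.Ici 0 by simp) (show (1:ℝ) ∈ Set.Ici 0 by simp)
        (sub_nonneg.2 hs1.le) hs0 (by ring)
      simp only [smul_eq_mul, mul_zero, mul_one, zero_add] at this
      linarith
  · exact (hd t ht).continuousAt.continuousWithinAt

lemma good_DD_scale {f : ℝ → ℝ} (hf : GoodDD f) (m : ℝ) (hm : 0 < m) :
    GoodDD (fun s => m * f (s / m)) := by
  have hmem : ∀ s : ℝ, 0 ≤ s → 0 ≤ s / m := fun s hs => by positivity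
  refine ⟨⟨convex_Ici 0, fun x hx y hy a b ha hb hab => ?_⟩, ?_, ?_, ?_⟩
  · have := hf.conv.2 (hmem x hx) (hmem y hy) ha hb hab
    simp only [smul_eq_mul] at *
    rw [show (a * x + b * y) / m = a * (x / m) + b * (y / m) by ring]
    nlinarith
  · exact continuousOn_const.mul (hf.cont.comp (by fun_prop) fun s hs => hmem s hs)
  · intro t ht
    exact (DifferentiableAt.comp (g := f) (f := fun s => s / m) t (hf.diff _ (by positivity))
      (by fun_prop)).const_mul m
  · intro t ht
    have := hf.nn _ (hmem t ht)
    positivity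

lemma coe_sum_DD {Z : Type*} (s : Finset Z) (f : Z → ℝ) :
    ((∑ z ∈ s, f z : ℝ) : EReal) = ∑ z ∈ s, (f z : EReal) := by
  induction s using Finset.induction_on with
  | empty => simp
  | insert a s ha ih => rw [Finset.sum_insert ha, Finset.sum_insert ha, EReal.coe_add, ih]

lemma div_DD {Z : Type*} [Fintype Z] {φ : ℝ → EReal} (hφ : AssumptionA φ) (ρ σ : Z → ℝ)
    (hρ : ∀ z, 0 ≤ ρ z) (hσ : ∀ z, 0 < σ z) :
    divergence φ ρ σ = ((∑ z, σ z * (φ (ρ z / σ z)).toReal : ℝ) : EReal) := by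
  unfold divergence
  simp only [hσ, if_true, fun z => (hσ z).ne', if_false, Finset.sum_const_zero, EReal.coe_zero,
    mul_zero, add_zero]
  rw [coe_sum_DD]
  refine Finset.sum_congr rfl fun z _ => ?_
  rw [EReal.coe_mul, EReal.coe_toReal (hφ.2.2.1 _ (div_nonneg (hρ z) (hσ z).le)) (hφ.1.2.2.1 _)]

lemma EJ_DD {W Y : Type*} [Fintype W] [Fintype Y]
    (c : W → Y → ℝ) (ε : ℝ) (φ₁ φ₂ : ℝ → EReal) (h₁ : AssumptionA φ₁) (h₂ : AssumptionA φ₂)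
    (μ : W → ℝ) (ν : Y → ℝ) (hμ : ∀ x, 0 < μ x) (hν : ∀ y, 0 < ν y)
    (νm : Y → ℝ) (hm : ∀ y, 0 ≤ νm y) (π : W → Y → ℝ) (hπ : ∀ x y, 0 ≤ π x y) :
    EJfun c ε φ₁ φ₂ μ ν νm π = ((FrDD
      (fun x y t => c x y * t + ε * (t * Real.log (t / (μ x * ν y)) - t + μ x * ν y))
      (fun x s => μ x * (φ₁ (s / μ x)).toReal) (fun y s => ν y * (φ₂ (s / ν y)).toReal)
      νm π : ℝ) : EReal) := by
  unfold EJfun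
  rw [div_DD h₁ _ _ (fun x => Finset.sum_nonneg fun y _ => hπ x y) hμ,
    div_DD h₂ _ _ (fun y => add_nonneg (Finset.sum_nonneg fun x _ => hπ x y) (hm y)) hν]
  unfold KLfin
  rw [if_pos (fun z hz => absurd hz (mul_pos (hμ _) (hν _)).ne')]
  rw [← EReal.coe_mul, ← EReal.coe_add, ← EReal.coe_add, ← EReal.coe_add]
  congr 1
  unfold FrDD
  rw [Fintype.sum_prod_type]
  simp only [Finset.sum_add_distrib (s := (Finset.univ : Finset W)), Finset.mul_sum]
  simp only [Finset.sum_add_distrib (f := fun y => c _ y * π _ y),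
    Finset.sum_add_distrib (s := (Finset.univ : Finset W))]

lemma sum_split_DD {X : Type*} [Fintype X] (J : Set X) (g : X → ℝ) :
    ∑ x, g x = ∑ j : J, g j + ∑ x, (Jᶜ).indicator g x := by
  have : ∑ j : J, g j = ∑ x, J.indicator g x := by
    rw [← Finset.sum_filter_add_sum_filter_not Finset.univ (· ∈ J) (J.indicator g)]
    rw [Finset.sum_eq_zero (s := Finset.univ.filter (¬ · ∈ J)) (by
      intro x hx; simp at hx; simp [hx]), add_zero]
    rw [Finset.sum_subtype (p := (· ∈ J)) (Finset.univ.filter (· ∈ J)) (by simp)]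
    refine Finset.sum_congr rfl fun j _ => ?_
    simp
  rw [this, ← Finset.sum_add_distrib]
  refine Finset.sum_congr rfl fun x _ => ?_
  by_cases hx : x ∈ J <;> simp [hx]

lemma Fr_split_DD {X Y : Type*} [Fintype X] [Fintype Y] (h : X → Y → ℝ → ℝ) (k : X → ℝ → ℝ)
    (l : Y → ℝ → ℝ) (J : Set X) (π r : X → Y → ℝ) (hr : ∀ x, x ∉ J → ∀ y, r x y = π x y) :
    FrDD h k l (fun _ => 0) r =
      FrDD (fun (j : J) => h j) (fun (j : J) => k j) l (outMarg J π) (fun j y => r j y) +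
      ∑ x, (Jᶜ).indicator (fun x => (∑ y, h x y (π x y)) + k x (∑ y, π x y)) x := by
  unfold FrDD
  have e1 := sum_split_DD J (fun x => (∑ y, h x y (r x y)) + k x (∑ y, r x y))
  have e2 : ∀ y, ∑ x, r x y = ∑ j : J, r j y + outMarg J π y := by
    intro y
    rw [sum_split_DD J (fun x => r x y)]
    congr 1
    unfold outMarg
    refine Finset.sum_congr rfl fun x _ => ?_
    by_cases hx : x ∈ J
    · simp [hx]
    · simp [hx, hr x hx]
  have e3 : ∑ x, (Jᶜ).indicator (fun x => (∑ y, h x y (r x y)) + k x (∑ y, r x y)) x =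
      ∑ x, (Jᶜ).indicator (fun x => (∑ y, h x y (π x y)) + k x (∑ y, π x y)) x := by
    refine Finset.sum_congr rfl fun x _ => ?_
    by_cases hx : x ∈ J
    · simp [hx]
    · simp [hx, hr x hx]
  rw [e1, e3]
  simp only [add_zero, e2]
  ring

/-- the sequential domain decomposition iterates, alternating
between partitions `𝒥_A` (odd iterations) and `𝒥_B` (even iterations), converge
pointwise to the unique global minimizer of the unbalanced objective `E`. -/
theorem sequential_domdec_converges
    {X Y : Type*} [Fintype X] [Fintype Y] [Nonempty X] [Nonempty Y]
    (μ : X → ℝ) (ν : Y → ℝ) (hμ : ∀ x, 0 < μ x) (hν : ∀ y, 0 < ν y)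
    (c : X → Y → ℝ) (ε : ℝ) (hε : 0 < ε)
    (φ₁ φ₂ : ℝ → EReal) (h₁ : AssumptionA φ₁) (h₂ : AssumptionA φ₂)
    {nA nB : ℕ} (JA : Fin nA → Set X) (JB : Fin nB → Set X)
    (hJA : IsFinPartition JA) (hJB : IsFinPartition JB)
    (update : Set X → (X → Y → ℝ) → (X → Y → ℝ))
    (hupd : IsCellUpdate c ε φ₁ φ₂ μ ν update)
    (π0 : X → Y → ℝ) (hπ0 : ∀ x y, 0 ≤ π0 x y)
    (hfin : Eglobal c ε φ₁ φ₂ μ ν π0 ≠ ⊤)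
    (iter : ℕ → X → Y → ℝ) (hiter0 : iter 0 = π0)
    (hiterS : ∀ k : ℕ, iter (k + 1) =
      if (k + 1) % 2 = 1 then sweep update JA (iter k) else sweep update JB (iter k)) :
    ∃ πopt : X → Y → ℝ, (∀ x y, 0 ≤ πopt x y) ∧
      (∀ π' : X → Y → ℝ, (∀ x y, 0 ≤ π' x y) →
          Eglobal c ε φ₁ φ₂ μ ν πopt ≤ Eglobal c ε φ₁ φ₂ μ ν π') ∧
      (∀ π' : X → Y → ℝ, (∀ x y, 0 ≤ π' x y) →
          (∀ π'' : X → Y → ℝ, (∀ x y, 0 ≤ π'' x y) →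
            Eglobal c ε φ₁ φ₂ μ ν π' ≤ Eglobal c ε φ₁ φ₂ μ ν π'') →
          π' = πopt) ∧
      ∀ x y, Filter.Tendsto (fun k => iter k x y) Filter.atTop (nhds (πopt x y)) := by
  have hE : ∀ π : X → Y → ℝ, (∀ x y, 0 ≤ π x y) → Eglobal c ε φ₁ φ₂ μ ν π = _ := fun π hπ =>
    EJ_DD c ε φ₁ φ₂ h₁ h₂ μ ν hμ hν (fun _ => 0) (fun _ => le_rfl) π hπ
  obtain ⟨p, hp, hmin, hun, hlim⟩ := abs_convDD
    (h := fun x y t => c x y * t + ε * (t * Real.log (t / (μ x * ν y)) - t + μ x * ν y))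
    (k := fun x s => μ x * (φ₁ (s / μ x)).toReal) (l := fun y s => ν y * (φ₂ (s / ν y)).toReal)
    (fun x y => goodH_DD (c x y) ε (μ x * ν y) hε (mul_pos (hμ x) (hν y)))
    (fun x => good_DD_scale (good_DD h₁) (μ x) (hμ x))
    (fun y => good_DD_scale (good_DD h₂) (ν y) (hν y))
    update (by
      intro J π hπ
      obtain ⟨a1, a2, a3⟩ := hupd J π hπ
      refine ⟨a1, a2, fun r hr hrp => ?_⟩
      have hout : ∀ y, 0 ≤ outMarg J π y := fun y => Finset.sum_nonneg fun x _ =>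
        Set.indicator_nonneg (fun x _ => hπ x y) x
      have := a3 (fun j y => r j y) (fun j y => hr j y)
      rw [EJ_DD (fun (j : J) y => c j y) ε φ₁ φ₂ h₁ h₂ (fun (j : J) => μ j) ν (fun j => hμ j) hν _ hout
          (fun (j : J) y => update J π j y) (fun j y => a1 j y),
        EJ_DD (fun (j : J) y => c j y) ε φ₁ φ₂ h₁ h₂ (fun (j : J) => μ j) ν (fun j => hμ j) hν _ hout
          (fun (j : J) y => r j y) (fun j y => hr j y),
        EReal.coe_le_coe_iff] at this
      rw [Fr_split_DD _ _ _ J π _ a2, Fr_split_DD _ _ _ J π _ hrp]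
      exact add_le_add_left this _)
    (List.ofFn JA) (List.ofFn JB) (by
      intro x
      have : x ∈ ⋃ i, JA i := by rw [hJA.2.1]; trivial
      obtain ⟨i, hi⟩ := Set.mem_iUnion.1 this
      exact ⟨JA i, by simp [List.mem_ofFn], hi⟩)
    iter (by rw [hiter0]; exact hπ0) hiterS
  refine ⟨p, hp, ?_, ?_, ?_⟩
  · intro r hr
    rw [hE p hp, hE r hr, EReal.coe_le_coe_iff]
    exact hmin r hr
  · intro r hr hrm
    have := hrm p hp
    rw [hE p hp, hE r hr, EReal.coe_le_coe_iff] at this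
    exact hun r hr this
  · intro x y
    exact tendsto_pi_nhds.1 (tendsto_pi_nhds.1 hlim x) y

end
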